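/- (Lemma 5.2, triangular structure of the structure group.) Let 0 < α ≤ 1 and k ≥ 1. Let β₁, …, β_{k+1} and γ be populated multi-indices, and let n₁, …, n_k ∈ ℕ² satisfy |n_i| < |β_i| for i = 1, …, k. Set β := β₁ + ⋯ + β_{k+1}. If the composition matrix entry (D^{(n₁)} ⋯ D^{(n_k)})_{β_{k+1}}^γ ≠ 0, then γ ≺ β and |γ| < |β|. -/

import Mathlib

open Finsupp

noncomputable section

/-- The index set `I`: symbols `z_k` for `k : ℕ` (left summand) and `z_n` for
`n ∈ ℕ² \ {(0,0)}` (right summand). -/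
abbrev RSIdx : Type := ℕ ⊕ {n : ℕ × ℕ // n ≠ (0, 0)}

/-- Multi-indices: finitely supported functions from the index set to `ℕ`. -/
abbrev MIdx : Type := RSIdx →₀ ℕ

/-- The unit multi-index `e_k`. -/
def eK (k : ℕ) : MIdx := Finsupp.single (Sum.inl k) 1

/-- The unit multi-index `e_n` for `n ≠ (0,0)`. -/
def eN (n : {n : ℕ × ℕ // n ≠ (0, 0)}) : MIdx := Finsupp.single (Sum.inr n) 1

/-- The scaled length `[β] = Σ_k k·β(k) − Σ_{n≠(0,0)} β(n)`. -/
def slen (β : MIdx) : ℤ :=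
  β.sum fun i m =>
    match i with
    | Sum.inl k => (k : ℤ) * (m : ℤ)
    | Sum.inr _ => -(m : ℤ)

/-- The parabolic length `|n| = n₁ + 2 n₂` of `n ∈ ℕ²`. -/
def plen (n : ℕ × ℕ) : ℕ := n.1 + 2 * n.2

/-- The polynomial part `|β|_p = Σ_{n≠(0,0)} |n|·β(n)`. -/
def polyPart (β : MIdx) : ℕ :=
  β.sum fun i m =>
    match i with
    | Sum.inl _ => 0
    | Sum.inr n => plen n.val * m

/-- The homogeneity `|β| = α(1+[β]) + |β|_p`. -/
def homog (α : ℝ) (β : MIdx) : ℝ := α * (1 + (slen β : ℝ)) + (polyPart β : ℝ)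

/-- `β` is purely polynomial iff `β = e_n` for some `n ≠ (0,0)`. -/
def PurelyPoly (β : MIdx) : Prop := ∃ n, β = eN n

/-- `β` is populated iff it is purely polynomial or `[β] ≥ 0`. -/
def Populated (β : MIdx) : Prop := PurelyPoly β ∨ 0 ≤ slen β

/-- The ordinal `|β|_≺ = [β] + (1/2)|β|_p + (1/4)β(0)`. -/
def precNorm (β : MIdx) : ℝ :=
  (slen β : ℝ) + (polyPart β : ℝ) / 2 + (β (Sum.inl 0) : ℝ) / 4

open Classical in
/-- The matrix entry `(D^(0))_β^γ` of the derivation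
`D^(0) = Σ_k (k+1) z_{k+1} ∂_{z_k}`: it is `(k+1)·γ(k)` if there exists `k` with
`γ + e_{k+1} = β + e_k` (such `k` is unique), and `0` otherwise. -/
def D0 (β γ : MIdx) : ℕ :=
  if h : ∃ k : ℕ, γ + eK (k + 1) = β + eK k then
    (h.choose + 1) * γ (Sum.inl h.choose)
  else 0

open Classical in
/-- The matrix entry of `D^(n)` for `n ∈ ℕ²`, where `D^((0,0))` means `D^(0)` and,
for `n ≠ (0,0)`, `(D^(n))_β^γ = β(n) + 1` if `γ = β + e_n`, and `0` otherwise. -/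
def DMat (n : ℕ × ℕ) : MIdx → MIdx → ℕ :=
  if hn : n = (0, 0) then D0
  else fun β γ =>
    if γ = β + eN ⟨n, hn⟩ then β (Sum.inr ⟨n, hn⟩) + 1 else 0

/-- Composition of two `ℕ`-valued matrices indexed by multi-indices; the sum over the
intermediate multi-index is well-defined (by row-finiteness) as a `finsum`. -/
def matMul (A B : MIdx → MIdx → ℕ) : MIdx → MIdx → ℕ :=
  fun β γ => ∑ᶠ δ : MIdx, A β δ * B δ γ

open Classical in
/-- The identity matrix. -/
def matId : MIdx → MIdx → ℕ := fun β γ => if γ = β then 1 else 0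

/-- Composition of a list of matrices. -/
def matProd : List (MIdx → MIdx → ℕ) → MIdx → MIdx → ℕ
  | [] => matId
  | A :: l => matMul A (matProd l)

/-- The `l`-fold matrix power of `D^(0)`. -/
def D0pow : ℕ → MIdx → MIdx → ℕ
  | 0 => matId
  | l + 1 => matMul D0 (D0pow l)

lemma slen_add (a b : MIdx) : slen (a + b) = slen a + slen b := by
  unfold slen
  apply Finsupp.sum_add_index'
  · rintro (k | n) <;> simp
  · rintro (k | n) x y <;> push_cast <;> ring

lemma polyPart_add (a b : MIdx) : polyPart (a + b) = polyPart a + polyPart b := by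
  unfold polyPart
  apply Finsupp.sum_add_index'
  · rintro (k | n) <;> simp
  · rintro (k | n) x y <;> simp <;> ring

lemma slen_eK (k : ℕ) : slen (eK k) = k := by
  unfold slen eK
  rw [Finsupp.sum_single_index] <;> simp

lemma slen_eN (n) : slen (eN n) = -1 := by
  unfold slen eN
  rw [Finsupp.sum_single_index] <;> simp

lemma polyPart_eK (k : ℕ) : polyPart (eK k) = 0 := by
  unfold polyPart eK
  rw [Finsupp.sum_single_index]
  rfl

lemma polyPart_eN (n) : polyPart (eN n) = plen n.val := by
  unfold polyPart eN
  rw [Finsupp.sum_single_index] <;> simp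

lemma eK_zero (k : ℕ) : eK k (Sum.inl 0) = if k = 0 then 1 else 0 := by
  unfold eK
  rw [Finsupp.single_apply]
  simp

lemma eN_zero (n) : eN n (Sum.inl 0) = 0 := by
  unfold eN
  rw [Finsupp.single_apply]
  simp

/-- cost of a step -/
def stepCost (n : ℕ × ℕ) : ℝ := -1 + (plen n : ℝ) / 2 + if plen n = 0 then 1 / 4 else 0

lemma plen_ne {n : ℕ × ℕ} (h : n ≠ (0, 0)) : plen n ≠ 0 := by
  rcases n with ⟨a, b⟩
  intro h0
  apply h
  simp only [plen] at h0
  have h1 : a = 0 := by omega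
  have h2 : b = 0 := by omega
  rw [h1, h2]

lemma step_bound (α : ℝ) (n : ℕ × ℕ) (β γ : MIdx) (h : DMat n β γ ≠ 0) :
    precNorm γ ≤ precNorm β + stepCost n ∧ homog α γ = homog α β + ((plen n : ℝ) - α) := by
  unfold DMat at h
  split_ifs at h with hn
  · unfold D0 at h
    split_ifs at h with hk
    · obtain ⟨k, hk⟩ := hk
      have h1 := congrArg slen hk
      have h2 := congrArg polyPart hk
      have h3 := DFunLike.congr_fun hk (Sum.inl 0)
      simp only [slen_add, polyPart_add, slen_eK, polyPart_eK, Finsupp.add_apply, eK_zero] at h1 h2 h3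
      have h1r : (slen γ : ℝ) = slen β - 1 := by
        have : slen γ = slen β - 1 := by push_cast at h1; linarith
        rw [this]; push_cast; ring
      have h2r : polyPart γ = polyPart β := by simpa using h2
      have h3r : (γ (Sum.inl 0) : ℝ) ≤ β (Sum.inl 0) + 1 := by
        have : γ (Sum.inl 0) ≤ β (Sum.inl 0) + 1 := by
          split_ifs at h3 <;> omega
        exact_mod_cast this
      have hp : plen n = 0 := by rw [hn]; rfl
      unfold precNorm homog stepCost
      rw [h1r, h2r, hp]
      constructor
      · simp; linarith
      · simp; ring
    · exact absurd rfl h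
  · simp only [ne_eq, ite_eq_right_iff, not_forall] at h
    obtain ⟨h, -⟩ := h
    subst h
    have := plen_ne hn
    unfold precNorm homog stepCost
    simp only [slen_add, polyPart_add, slen_eN, polyPart_eN, Finsupp.add_apply, eN_zero, this, if_false]
    push_cast
    constructor
    · linarith
    · ring

lemma chain_bound (α : ℝ) (L : List (ℕ × ℕ)) (β γ : MIdx) (h : matProd (L.map DMat) β γ ≠ 0) :
    precNorm γ ≤ precNorm β + (L.map stepCost).sum ∧
      homog α γ = homog α β + (L.map fun n => (plen n : ℝ) - α).sum := by
  induction L generalizing β with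
  | nil =>
    simp only [List.map_nil, matProd, matId, ne_eq, ite_eq_right_iff, not_forall] at h
    obtain ⟨h, -⟩ := h
    subst h
    simp
  | cons n L ih =>
    simp only [List.map_cons, matProd, matMul] at h
    obtain ⟨δ, hδ⟩ : ∃ δ, DMat n β δ * matProd (L.map DMat) δ γ ≠ 0 := by
      by_contra hcon
      push Not at hcon
      exact h (by simp [hcon])
    have h1 := step_bound α n β δ (left_ne_zero_of_mul hδ)
    have h2 := ih δ (right_ne_zero_of_mul hδ)
    simp only [List.map_cons, List.sum_cons]
    constructor
    · linarith [h1.1, h2.1]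
    · linarith [h1.2, h2.2]

lemma precNorm_add (a b : MIdx) : precNorm (a + b) = precNorm a + precNorm b := by
  unfold precNorm
  rw [slen_add, polyPart_add, Finsupp.add_apply]
  push_cast
  ring

lemma precNorm_sum {ι : Type} (s : Finset ι) (f : ι → MIdx) :
    precNorm (∑ i ∈ s, f i) = ∑ i ∈ s, precNorm (f i) := by
  classical
  induction s using Finset.induction_on with
  | empty => simp [precNorm, slen, polyPart]
  | insert a s ha ih => rw [Finset.sum_insert ha, Finset.sum_insert ha, precNorm_add, ih]

lemma homog_sum {ι : Type} (α : ℝ) (s : Finset ι) (f : ι → MIdx) :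
    homog α (∑ i ∈ s, f i) - α = ∑ i ∈ s, (homog α (f i) - α) := by
  classical
  induction s using Finset.induction_on with
  | empty => simp [homog, slen, polyPart]
  | insert a s ha ih =>
    rw [Finset.sum_insert ha, Finset.sum_insert ha, ← ih]
    unfold homog
    rw [slen_add, polyPart_add]
    push_cast
    ring

lemma cost_lt (α : ℝ) (hα0 : 0 < α) (hα1 : α ≤ 1) (β : MIdx) (hβ : Populated β) (n : ℕ × ℕ)
    (hn : (plen n : ℝ) < homog α β) : stepCost n < precNorm β := by
  have hs : -1 ≤ slen β := by
    rcases hβ with ⟨m, rfl⟩ | h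
    · rw [slen_eN]
    · linarith
  have h0 : (0 : ℝ) ≤ β (Sum.inl 0) := Nat.cast_nonneg _
  have hp : (0 : ℝ) ≤ polyPart β := Nat.cast_nonneg _
  have hsr : (-1 : ℝ) ≤ slen β := by exact_mod_cast hs
  have hm : α * (1 + (slen β : ℝ)) ≤ 1 + (slen β : ℝ) := by nlinarith
  unfold homog at hn
  unfold stepCost precNorm
  split_ifs with hz
  · rw [hz] at hn ⊢
    rcases hs.eq_or_lt with he | hl
    · rw [← he] at hn ⊢
      have : 0 < polyPart β := by
        have : (0 : ℝ) < polyPart β := by simpa using hn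
        exact_mod_cast this
      have : (1 : ℝ) ≤ polyPart β := by exact_mod_cast this
      push_cast
      linarith
    · have : (0 : ℝ) ≤ slen β := by
        have : 0 ≤ slen β := by omega
        exact_mod_cast this
      push_cast
      linarith
  · linarith

/-- Lemma 5.2 (triangular structure of the structure group): with `0 < α ≤ 1`,
`k ≥ 1`, populated `β₁, …, β_{k+1}` and `γ`, and `n₁, …, n_k ∈ ℕ²` with
`|nᵢ| < |βᵢ|`, set `β = β₁ + ⋯ + β_{k+1}`; if
`(D^{(n₁)} ⋯ D^{(n_k)})_{β_{k+1}}^γ ≠ 0` then `γ ≺ β` and `|γ| < |β|`. -/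
theorem statement13 (α : ℝ) (hα0 : 0 < α) (hα1 : α ≤ 1) (k : ℕ) (hk : 1 ≤ k)
    (βs : Fin (k + 1) → MIdx) (hpop : ∀ i, Populated (βs i))
    (γ : MIdx) (hγpop : Populated γ)
    (ns : Fin k → ℕ × ℕ)
    (hn : ∀ i : Fin k, (plen (ns i) : ℝ) < homog α (βs i.castSucc))
    (h : matProd ((List.ofFn ns).map DMat) (βs (Fin.last k)) γ ≠ 0) :
    precNorm γ < precNorm (∑ j, βs j)
    ∧ homog α γ < homog α (∑ j, βs j) := by
  have hc := chain_bound α _ _ _ h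
  simp only [List.map_ofFn, List.sum_ofFn, Function.comp] at hc
  have hne : (Finset.univ : Finset (Fin k)).Nonempty := ⟨⟨0, hk⟩, Finset.mem_univ _⟩
  constructor
  · rw [precNorm_sum, Fin.sum_univ_castSucc]
    have := Finset.sum_lt_sum_of_nonempty hne
      (fun i _ => cost_lt α hα0 hα1 _ (hpop (Fin.castSucc i)) (ns i) (hn i))
    linarith [hc.1]
  · have h1 := homog_sum α Finset.univ βs
    rw [Fin.sum_univ_castSucc (f := fun i => homog α (βs i) - α)] at h1
    have := Finset.sum_lt_sum_of_nonempty hne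
      (fun i _ => sub_lt_sub_right (hn i) α)
    linarith [hc.2]
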